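/- Let M be a semi-integral residuated pomonoid and write ~a := a\e (= e/a). Then ~~(a·(~a)) = e for all a ∈ M; that is, in the image of the nucleus α(a) = ~~a (with product a ∗ b := ~~(a·b)), every element α(a) is invertible with inverse ~a, so the image is a group. -/

import Mathlib

/-- A semi-integral residuated pomonoid (sirmonoid): a partially ordered monoid with
left and right residuals, i.e. `b ≤ a\c ↔ a*b ≤ c ↔ a ≤ c/b`, in which the monoid
unit `e` is a maximal element.  `ldiv a c` denotes `a\c` and `rdiv c b` denotes `c/b`. -/
class Sirmonoid (α : Type*) extends PartialOrder α, Monoid α where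
  ldiv : α → α → α
  rdiv : α → α → α
  le_ldiv_iff : ∀ a b c : α, b ≤ ldiv a c ↔ a * b ≤ c
  le_rdiv_iff : ∀ a b c : α, a ≤ rdiv c b ↔ a * b ≤ c
  one_maximal : ∀ a : α, 1 ≤ a → a = 1

open Sirmonoid

/-!
Write `~x := x\e`. Maximality of `e` gives `x ≤ y ↔ x\y = e`, so `~~x = ~e = e` as soon as
`x ≤ e`, and it suffices to bound `a·~a` and `~~a·~a` by `e`. The first bound is the residuation
law; the second follows from it, since `a·b ≤ e` gives `a·(b·a) = (a·b)·a ≤ a`, hence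
`b·a ≤ a\a = e`.
-/

/-- `res` is the left residual of the multiplication: `res a c`, written `a\c`, is the largest `b`
with `a * b ≤ c`. The operation `res` is a parameter and not a class field, so that the notion
applies to `Sirmonoid.ldiv` as it stands. -/
def IsLeftResidual {α : Type*} [Preorder α] [Mul α] (res : α → α → α) : Prop :=
  ∀ a, GaloisConnection (a * ·) (res a)

namespace IsLeftResidual

theorem mul_res_le {α : Type*} [Preorder α] [Mul α] {res : α → α → α}
    (hres : IsLeftResidual res) (a b : α) : a * res a b ≤ b :=
  (hres a).l_u_le b

section MulOneClass

variable {α : Type*} [PartialOrder α] [MulOneClass α] {res : α → α → α}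

theorem one_le_res_iff (hres : IsLeftResidual res) {a b : α} : 1 ≤ res a b ↔ a ≤ b := by
  simpa only [mul_one] using (hres a 1 b).symm

theorem res_eq_one_iff (hres : IsLeftResidual res) (hone : IsMax (1 : α)) {a b : α} :
    res a b = 1 ↔ a ≤ b :=
  ⟨fun h => hres.one_le_res_iff.1 h.ge, fun h => (hone.eq_of_le (hres.one_le_res_iff.2 h)).symm⟩

theorem res_res_one_eq_one_of_le_one (hres : IsLeftResidual res) (hone : IsMax (1 : α)) {a : α}
    (ha : a ≤ 1) : res (res a 1) 1 = 1 := by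
  rw [(hres.res_eq_one_iff hone).2 ha, (hres.res_eq_one_iff hone).2 le_rfl]

end MulOneClass

theorem mul_le_one_swap {α : Type*} [PartialOrder α] [Monoid α] [MulRightMono α]
    {res : α → α → α} (hres : IsLeftResidual res) (hone : IsMax (1 : α)) {a b : α}
    (hab : a * b ≤ 1) : b * a ≤ 1 :=
  have aba_le : a * (b * a) ≤ a := by
    rw [← mul_assoc]
    exact mul_le_of_le_one_left' hab
  calc
    b * a ≤ res a a := (hres a).le_u aba_le
    _ = 1 := (hres.res_eq_one_iff hone).2 le_rfl

end IsLeftResidual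

namespace Sirmonoid

variable {α : Type*} [Sirmonoid α]

theorem isLeftResidual_ldiv : IsLeftResidual (ldiv : α → α → α) :=
  fun a b c => (le_ldiv_iff a b c).symm

theorem isMax_one : IsMax (1 : α) :=
  fun a ha => (one_maximal a ha).le

instance : MulRightMono α where
  elim a b c hbc :=
    have le_rdiv : c ≤ rdiv (c * a) a := (le_rdiv_iff c a (c * a)).2 le_rfl
    (le_rdiv_iff b a (c * a)).1 (hbc.trans le_rdiv)

end Sirmonoid

theorem sirmonoid_notnot_mul_not_eq_one_general {α : Type*} [PartialOrder α] [Monoid α]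
    [MulRightMono α] {res : α → α → α} (hres : IsLeftResidual res) (hone : IsMax (1 : α)) (a : α) :
    res (res (a * res a 1) 1) 1 = 1 ∧
      res (res (res (res a 1) 1 * res a 1) 1) 1 = 1 ∧
      res (res (res a 1 * res (res a 1) 1) 1) 1 = 1 := by
  have mul_not_le (b : α) : b * res b 1 ≤ 1 := hres.mul_res_le b 1
  have notnot_mul_not_le : res (res a 1) 1 * res a 1 ≤ 1 :=
    hres.mul_le_one_swap hone (mul_not_le (res a 1))
  exact ⟨hres.res_res_one_eq_one_of_le_one hone (mul_not_le a),
    hres.res_res_one_eq_one_of_le_one hone notnot_mul_not_le,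
    hres.res_res_one_eq_one_of_le_one hone (mul_not_le (res a 1))⟩

/-- In any sirmonoid, `~~(a·(~a)) = e` for all `a`; in the image of the nucleus
`α(a) = ~~a`, with product `a ∗ b := ~~(a·b)`, every element `α(a)` is invertible
with inverse `~a` (so the image is a group).  Here `~a := a\e = e/a`. -/
theorem sirmonoid_notnot_mul_not_eq_one {α : Type*} [Sirmonoid α] :
    ∀ a : α, ldiv (ldiv (a * ldiv a 1) 1) 1 = 1 ∧
      ldiv (ldiv (ldiv (ldiv a 1) 1 * ldiv a 1) 1) 1 = 1 ∧
      ldiv (ldiv (ldiv a 1 * ldiv (ldiv a 1) 1) 1) 1 = 1 :=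
  sirmonoid_notnot_mul_not_eq_one_general isLeftResidual_ldiv isMax_one
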